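/- Let p ∈ ℝ[x₁,…,xₙ] be a real-zero polynomial with respect to e ∈ ℝⁿ and let a ∈ ℝⁿ. For every f in the interior of the rigidly convex set S_e(p), the multiplicity of p at a equals the order of vanishing of the univariate polynomial p_{a−f,f}(t) := p(f + t(a − f)) at t = 1. -/

import Mathlib

open MvPolynomial

/-- The univariate polynomial `t ↦ h(a + t·v)` obtained by restricting a multivariate
polynomial `h` to the line through `a` with direction `v`. -/
noncomputable def linePoly {n : ℕ} (h : MvPolynomial (Fin n) ℝ) (a v : Fin n → ℝ) :
    Polynomial ℝ :=
  MvPolynomial.aeval (fun i => Polynomial.C (a i) + Polynomial.C (v i) * Polynomial.X) h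

/-- A real univariate polynomial has only real roots. -/
def RealRooted (q : Polynomial ℝ) : Prop :=
  ∀ z : ℂ, Polynomial.aeval z q = 0 → z.im = 0

/-- A real univariate polynomial has only non-negative real roots. -/
def NonnegRealRooted (q : Polynomial ℝ) : Prop :=
  ∀ z : ℂ, Polynomial.aeval z q = 0 → z.im = 0 ∧ 0 ≤ z.re

/-- `h` is hyperbolic in direction `e`: `h(e) ≠ 0` and for all `a` the univariate
polynomial `t ↦ h(a - t·e)` has only real roots. -/
def IsHyperbolic {n : ℕ} (h : MvPolynomial (Fin n) ℝ) (e : Fin n → ℝ) : Prop :=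
  MvPolynomial.eval e h ≠ 0 ∧ ∀ a : Fin n → ℝ, RealRooted (linePoly h a (-e))

/-- The hyperbolicity cone `Λ_e(h)`. -/
def hypCone {n : ℕ} (h : MvPolynomial (Fin n) ℝ) (e : Fin n → ℝ) : Set (Fin n → ℝ) :=
  {a | NonnegRealRooted (linePoly h a (-e))}

/-- multiplicity (order of vanishing) of `h` at `a`: the smallest `m` such that the
degree-`m` homogeneous component of `h(x + a)` is non-zero. -/
noncomputable def multAt {n : ℕ} (h : MvPolynomial (Fin n) ℝ) (a : Fin n → ℝ) : ℕ :=
  sInf {m | MvPolynomial.homogeneousComponent m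
    (MvPolynomial.aeval (fun i => MvPolynomial.X i + MvPolynomial.C (a i)) h) ≠ 0}

/-- `p` is a real-zero polynomial with respect to `e`. -/
def IsRealZero {n : ℕ} (p : MvPolynomial (Fin n) ℝ) (e : Fin n → ℝ) : Prop :=
  MvPolynomial.eval e p ≠ 0 ∧ ∀ v : Fin n → ℝ, RealRooted (linePoly p e v)

/-- The rigidly convex set `S_e(p)` of a real-zero polynomial. -/
def rigidSet {n : ℕ} (p : MvPolynomial (Fin n) ℝ) (e : Fin n → ℝ) : Set (Fin n → ℝ) :=
  {a | ∀ t : ℝ, 0 ≤ t → t < 1 → ¬ (linePoly p e (a - e)).IsRoot t}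

/-- A polynomial is strictly quasi-concave at `a` if its Hessian at `a` is negative
definite on the orthogonal complement of its gradient at `a`. -/
def StrictQuasiConcaveAt {n : ℕ} (g : MvPolynomial (Fin n) ℝ) (a : Fin n → ℝ) : Prop :=
  ∀ v : Fin n → ℝ, v ≠ 0 →
    (∑ i, v i * MvPolynomial.eval a (MvPolynomial.pderiv i g)) = 0 →
    (∑ i, ∑ j, v i * v j *
      MvPolynomial.eval a (MvPolynomial.pderiv i (MvPolynomial.pderiv j g))) < 0

/-- A spectrahedral shadow (cone version): a linear image of
`{a : a₁M₁ + ⋯ + aₘMₘ ⪰ 0}` for real symmetric matrices `Mᵢ`. -/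
def IsSpectrahedralShadowCone {n : ℕ} (S : Set (Fin n → ℝ)) : Prop :=
  ∃ (m d : ℕ) (M : Fin m → Matrix (Fin d) (Fin d) ℝ)
    (L : (Fin m → ℝ) →ₗ[ℝ] (Fin n → ℝ)),
      (∀ i, (M i).IsSymm) ∧ S = L '' {a | (∑ i, a i • M i).PosSemidef}

/-- A spectrahedral shadow: a linear image of
`{b : M₀ + b₁M₁ + ⋯ + bₘMₘ ⪰ 0}` for real symmetric matrices `Mᵢ`. -/
def IsSpectrahedralShadow {n : ℕ} (S : Set (Fin n → ℝ)) : Prop :=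
  ∃ (m d : ℕ) (M₀ : Matrix (Fin d) (Fin d) ℝ) (M : Fin m → Matrix (Fin d) (Fin d) ℝ)
    (L : (Fin m → ℝ) →ₗ[ℝ] (Fin n → ℝ)),
      M₀.IsSymm ∧ (∀ i, (M i).IsSymm) ∧
      S = L '' {b | (M₀ + ∑ i, b i • M i).PosSemidef}

/-- A convex set is pointed if it contains no affine line. -/
def PointedSet {n : ℕ} (S : Set (Fin n → ℝ)) : Prop :=
  ¬ ∃ (a v : Fin n → ℝ), v ≠ 0 ∧ ∀ t : ℝ, a + t • v ∈ S

/-- Directional derivative `∂_e h = Σᵢ eᵢ ∂h/∂xᵢ`. -/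
noncomputable def dirDeriv {n : ℕ} (e : Fin n → ℝ) (h : MvPolynomial (Fin n) ℝ) :
    MvPolynomial (Fin n) ℝ :=
  ∑ i, e i • MvPolynomial.pderiv i h

/-!
The engine is Hurwitz's theorem: along a continuous family of entire functions, roots neither
appear nor disappear in a bounded set as long as none lies on its frontier, and a limit of
zero-free functions is zero-free or vanishes identically.

It yields Gårding's theorem: if `p` is real-zero with respect to `e` and does not vanish on the
segment from `e` to `g`, then `p` is real-zero with respect to `g`. Hence `p` is real-zero with
respect to every point near `f`, and it follows that `p (a + l y)` is non-zero when `l > 0` is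
small and `y ∈ ℂⁿ` is close to `i (f - a)`. With `m` the multiplicity of `p` at `a`, the initial
form of `p` at `a` is the limit of `l⁻ᵐ p (a + l y)` as `l → 0`; as it is not identically zero, it
does not vanish at `i (f - a)`, so by homogeneity it does not vanish at `a - f` either. Restricted
to the line through `a` and `f`, `p` therefore vanishes at `a` to order exactly `m`.
-/

open Filter Topology

section Hurwitz

variable {X : Type*} [TopologicalSpace X] {x₀ : X}

lemma exists_mem_frontier_norm_le {f : ℂ → ℂ} {U : Set ℂ} (hU : Bornology.IsBounded U)
    (hf : DiffContOnCl ℂ f U) (hne : ∀ w ∈ closure U, f w ≠ 0) {z : ℂ} (hz : z ∈ closure U) :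
    ∃ w ∈ frontier U, ‖f w‖ ≤ ‖f z‖ := by
  obtain ⟨w, hw, hmax⟩ := Complex.exists_mem_frontier_isMaxOn_norm hU
    (closure_nonempty_iff.1 ⟨z, hz⟩) (hf.inv hne)
  have hle : ‖f z‖⁻¹ ≤ ‖f w‖⁻¹ := by simpa using hmax hz
  have hpos : 0 < ‖f z‖ := norm_pos_iff.2 (hne z hz)
  exact ⟨w, hw, (inv_le_inv₀ hpos (norm_pos_iff.2 (hne w (frontier_subset_closure hw)))).1 hle⟩

lemma eventually_exists_mem_eq_zero {F : X → ℂ → ℂ} (hF : Continuous F.uncurry)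
    (hd : ∀ x, Differentiable ℂ (F x)) {U : Set ℂ} (hU : Bornology.IsBounded U)
    (hfr : ∀ w ∈ frontier U, F x₀ w ≠ 0) {z : ℂ} (hz : z ∈ U) (hz₀ : F x₀ z = 0) :
    ∀ᶠ x in 𝓝 x₀, ∃ w ∈ U, F x w = 0 := by
  have hcompact : IsCompact (frontier U) :=
    hU.isCompact_closure.of_isClosed_subset isClosed_frontier frontier_subset_closure
  have hlt : ∀ᶠ x in 𝓝 x₀, ∀ w ∈ frontier U, ‖F x z‖ < ‖F x w‖ := by
    refine hcompact.eventually_forall_of_forall_eventually fun w hw ↦ ?_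
    have hcz : Continuous fun q : X × ℂ ↦ ‖F q.1 z‖ := (hF.comp (by fun_prop :
      Continuous fun q : X × ℂ ↦ (q.1, z))).norm
    refine hcz.continuousAt.eventually_lt hF.norm.continuousAt ?_
    simpa [hz₀] using hfr w hw
  filter_upwards [hlt] with x hx
  by_contra! hne
  have hne_closure : ∀ w ∈ closure U, F x w ≠ 0 := by
    rw [closure_eq_self_union_frontier]
    rintro w (hw | hw)
    · exact hne w hw
    · exact norm_pos_iff.1 ((norm_nonneg _).trans_lt (hx w hw))
  obtain ⟨w, hw, hle⟩ := exists_mem_frontier_norm_le hU (hd x).diffContOnCl hne_closure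
    (subset_closure hz)
  exact (hx w hw).not_ge hle

lemma forall_mem_ne_zero_of_forall_frontier [PreconnectedSpace X] {F : X → ℂ → ℂ}
    (hF : Continuous F.uncurry) (hd : ∀ x, Differentiable ℂ (F x)) {U : Set ℂ}
    (hU : Bornology.IsBounded U) (hfr : ∀ x, ∀ w ∈ frontier U, F x w ≠ 0)
    (h₀ : ∀ w ∈ U, F x₀ w ≠ 0) (x : X) : ∀ w ∈ U, F x w ≠ 0 := by
  have mem_of_mem_closure {y : X} {w : ℂ} (hw : w ∈ closure U) (hyw : F y w = 0) : w ∈ U := by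
    rw [closure_eq_self_union_frontier] at hw
    exact hw.resolve_right fun hw ↦ hfr y w hw hyw
  have hopen : IsOpen {y | ∀ w ∈ U, F y w ≠ 0} := by
    refine isOpen_iff_mem_nhds.2 fun y hy ↦ ?_
    have hnear : ∀ᶠ y' in 𝓝 y, ∀ w ∈ closure U, F y' w ≠ 0 :=
      hU.isCompact_closure.eventually_forall_of_forall_eventually fun w hw ↦
        hF.continuousAt.eventually_ne fun h ↦ hy w (mem_of_mem_closure hw h) h
    exact hnear.mono fun y' hy' w hw ↦ hy' w (subset_closure hw)
  have hclosed : IsClosed {y | ∀ w ∈ U, F y w ≠ 0} := by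
    refine isOpen_compl_iff.1 (isOpen_iff_mem_nhds.2 fun y hy ↦ ?_)
    obtain ⟨z, hz, hz₀⟩ : ∃ z ∈ U, F y z = 0 := by simpa using hy
    filter_upwards [eventually_exists_mem_eq_zero hF hd hU (hfr y) hz hz₀] with y' hy'
    simpa using hy'
  exact Set.eq_univ_iff_forall.1 (IsClopen.eq_univ ⟨hclosed, hopen⟩ ⟨x₀, h₀⟩) x

lemma eq_zero_of_eventually_ne_zero_complex {F : X → ℂ → ℂ} (hF : Continuous F.uncurry)
    (hd : ∀ x, Differentiable ℂ (F x)) {l : Filter X} [l.NeBot] (hl : l ≤ 𝓝 x₀) {c : ℂ}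
    (hc : F x₀ c = 0) (hne : ∀ᶠ q in l ×ˢ 𝓝 c, F q.1 q.2 ≠ 0) : F x₀ = 0 := by
  have han : AnalyticOnNhd ℂ (F x₀) Set.univ := (hd x₀).differentiableOn.analyticOnNhd isOpen_univ
  rcases (han c trivial).eventually_eq_zero_or_eventually_ne_zero with hzero | hiso
  · exact han.eq_of_eventuallyEq (analyticOnNhd_const (v := 0)) hzero
  obtain ⟨P, hP, Q, hQ, hPQ⟩ := eventually_prod_iff.1 hne
  obtain ⟨r, hr, hball⟩ := Metric.nhds_basis_closedBall.eventually_iff.1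
    ((eventually_nhdsWithin_iff.1 hiso).and hQ)
  have hfr : ∀ w ∈ frontier (Metric.ball c r), F x₀ w ≠ 0 := by
    rw [frontier_ball c hr.ne']
    exact fun w hw ↦ (hball (Metric.sphere_subset_closedBall hw)).1
      (Metric.ne_of_mem_sphere hw hr.ne')
  have hzeros := hl (eventually_exists_mem_eq_zero hF hd Metric.isBounded_ball hfr
    (Metric.mem_ball_self hr) hc)
  obtain ⟨x, ⟨w, hw, hw₀⟩, hx⟩ := (Eventually.and hzeros hP).exists
  exact absurd hw₀ (hPQ hx (hball (Metric.ball_subset_closedBall hw)).2)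

lemma eq_zero_of_eventually_ne_zero {E : Type*} [NormedAddCommGroup E] [NormedSpace ℂ E]
    {F : X → E → ℂ} (hF : Continuous F.uncurry) (hd : ∀ x, Differentiable ℂ (F x))
    {l : Filter X} [l.NeBot] (hl : l ≤ 𝓝 x₀) {c : E} (hc : F x₀ c = 0)
    (hne : ∀ᶠ q in l ×ˢ 𝓝 c, F q.1 q.2 ≠ 0) : F x₀ = 0 := by
  funext y
  let line (ζ : ℂ) : E := c + ζ • (y - c)
  have hline : Tendsto line (𝓝 0) (𝓝 c) := by
    have : Continuous line := by fun_prop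
    simpa [line] using this.tendsto 0
  have hzero : (fun ζ ↦ F x₀ (line ζ)) = 0 :=
    eq_zero_of_eventually_ne_zero_complex (F := fun x ζ ↦ F x (line ζ))
      (hF.comp (by fun_prop : Continuous fun q : X × ℂ ↦ (q.1, line q.2)))
      (fun x ↦ (hd x).comp (by fun_prop)) hl (c := 0) (by simpa [line] using hc)
      ((tendsto_id.prodMap hline).eventually hne)
  simpa [line] using congrFun hzero 1

end Hurwitz

section Polynomials

variable {σ R S : Type*}

lemma differentiable_aeval [Finite σ] [CommSemiring R] {𝕜 : Type*} [NontriviallyNormedField 𝕜]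
    [Algebra R 𝕜] (q : MvPolynomial σ R) : Differentiable 𝕜 fun y : σ → 𝕜 ↦ aeval y q := by
  have := Fintype.ofFinite σ
  have hcoord (i : σ) (y : σ → 𝕜) : AnalyticAt 𝕜 (fun y ↦ y i) y :=
    (ContinuousLinearMap.proj (R := 𝕜) (φ := fun _ ↦ 𝕜) i).analyticAt y
  exact fun y ↦ (AnalyticAt.aeval_mvPolynomial (hcoord · y) q).differentiableAt

lemma aeval_ofReal (x : σ → ℝ) (p : MvPolynomial σ ℝ) :
    aeval (fun i ↦ (x i : ℂ)) p = eval x p := by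
  rw [← aeval_eq_eval]
  exact aeval_algebraMap_apply ℂ x p

lemma aeval_smul_of_isHomogeneous [CommSemiring R] [CommSemiring S] [Algebra R S]
    {φ : MvPolynomial σ R} {m : ℕ} (hφ : φ.IsHomogeneous m) (c : S) (y : σ → S) :
    aeval (c • y) φ = c ^ m * aeval y φ := by
  rw [aeval_def, aeval_def, eval₂_eq, eval₂_eq, Finset.mul_sum]
  refine Finset.sum_congr rfl fun d hd ↦ ?_
  have hdeg : ∑ i ∈ d.support, d i = m := by
    rw [← hφ (mem_support_iff.1 hd)]
    exact DFunLike.congr_fun Finsupp.degree_eq_weight_one d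
  simp only [Pi.smul_apply, smul_eq_mul, mul_pow, Finset.prod_mul_distrib,
    Finset.prod_pow_eq_pow_sum, hdeg]
  ring

lemma aeval_smul_eq_sum [CommSemiring R] [CommSemiring S] [Algebra R S] (q : MvPolynomial σ R)
    (c : S) (y : σ → S) :
    aeval (c • y) q =
      ∑ k ∈ Finset.range (q.totalDegree + 1), c ^ k * aeval y (homogeneousComponent k q) := by
  conv_lhs => rw [← sum_homogeneousComponent q, map_sum]
  exact Finset.sum_congr rfl fun k _ ↦
    aeval_smul_of_isHomogeneous (homogeneousComponent_isHomogeneous k q) c y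

lemma coeff_aeval_X_smul [CommSemiring R] [CommSemiring S] [Algebra R S] (q : MvPolynomial σ R)
    (y : σ → S) (k : ℕ) :
    (aeval ((Polynomial.X : Polynomial S) • fun i ↦ Polynomial.C (y i)) q).coeff k =
      aeval y (homogeneousComponent k q) := by
  have hC (φ : MvPolynomial σ R) :
      aeval (fun i ↦ Polynomial.C (y i)) φ = Polynomial.C (aeval y φ) :=
    (MvPolynomial.map_aeval y (Polynomial.C : S →+* Polynomial S) φ).symm
  rw [aeval_smul_eq_sum, Polynomial.finsetSum_coeff]
  simp_rw [hC, Polynomial.X_pow_mul, Polynomial.coeff_C_mul_X_pow]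
  rw [Finset.sum_ite_eq]
  split_ifs with hk
  · rfl
  · rw [homogeneousComponent_eq_zero k q (by grind), map_zero]

/-- The translate `p(x + a)` of `p`, whose homogeneous parts are the Taylor terms of `p` at `a`. -/
noncomputable def translatePoly [CommSemiring R] (p : MvPolynomial σ R) (a : σ → R) :
    MvPolynomial σ R :=
  aeval (fun i ↦ X i + C (a i)) p

lemma aeval_translatePoly [CommSemiring R] [CommSemiring S] [Algebra R S] (p : MvPolynomial σ R)
    (a : σ → R) (y : σ → S) :
    aeval y (translatePoly p a) = aeval (fun i ↦ y i + algebraMap R S (a i)) p := by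
  rw [translatePoly, ← AlgHom.comp_apply]
  congr 1
  ext i
  simp

lemma translatePoly_ne_zero [CommRing R] {p : MvPolynomial σ R} (hp : p ≠ 0) (a : σ → R) :
    translatePoly p a ≠ 0 := by
  intro h
  have hinv := aeval_translatePoly p a fun i ↦ X i - C (a i)
  simp only [h, map_zero, algebraMap_eq, sub_add_cancel] at hinv
  exact hp ((aeval_X_left_apply p).symm.trans hinv.symm)

lemma exists_homogeneousComponent_ne_zero [CommSemiring R] {q : MvPolynomial σ R} (hq : q ≠ 0) :
    ∃ k, homogeneousComponent k q ≠ 0 := by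
  contrapose! hq
  rw [← sum_homogeneousComponent q]
  exact Finset.sum_eq_zero fun k _ ↦ hq k

/-- The rescaling `c⁻ᵐ q(c y)` of `q` near the origin, written without division so that it makes
sense at `c = 0`: the homogeneous components of degree below `m` are dropped. -/
noncomputable def blowup [CommSemiring R] [CommSemiring S] [Algebra R S] (q : MvPolynomial σ R)
    (m : ℕ) (c : S) (y : σ → S) : S :=
  ∑ k ∈ Finset.Ico m (q.totalDegree + 1), c ^ (k - m) * aeval y (homogeneousComponent k q)

lemma blowup_zero [CommSemiring R] [CommSemiring S] [Algebra R S] (q : MvPolynomial σ R) (m : ℕ)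
    (y : σ → S) : blowup q m 0 y = aeval y (homogeneousComponent m q) := by
  rw [blowup, Finset.sum_eq_single m]
  · simp
  · intro k hk hkm
    rw [zero_pow (by grind), zero_mul]
  · intro hm
    rw [homogeneousComponent_eq_zero m q (by grind)]
    simp

lemma continuous_blowup [Finite σ] [CommSemiring R] {𝕜 : Type*} [NontriviallyNormedField 𝕜]
    [Algebra R 𝕜] (q : MvPolynomial σ R) (m : ℕ) :
    Continuous fun x : 𝕜 × (σ → 𝕜) ↦ blowup q m x.1 x.2 :=
  continuous_finsetSum _ fun k _ ↦ (continuous_fst.pow _).mul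
    ((differentiable_aeval (homogeneousComponent k q)).continuous.comp continuous_snd)

lemma differentiable_blowup [Finite σ] [CommSemiring R] {𝕜 : Type*} [NontriviallyNormedField 𝕜]
    [Algebra R 𝕜] (q : MvPolynomial σ R) (m : ℕ) (c : 𝕜) :
    Differentiable 𝕜 fun y : σ → 𝕜 ↦ blowup q m c y := by
  have := Fintype.ofFinite σ
  exact .fun_sum fun k _ ↦ (differentiable_aeval (homogeneousComponent k q)).const_mul _

lemma pow_mul_blowup [CommSemiring R] [CommSemiring S] [Algebra R S] {q : MvPolynomial σ R}
    {m : ℕ} (hq : ∀ k < m, homogeneousComponent k q = 0) (c : S) (y : σ → S) :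
    c ^ m * blowup q m c y = aeval (c • y) q := by
  rw [blowup, aeval_smul_eq_sum, Finset.mul_sum]
  refine (Finset.sum_congr rfl fun k hk ↦ ?_).trans
    (Finset.sum_subset (fun k hk ↦ by grind) fun k _ hk ↦ ?_)
  · rw [← mul_assoc, pow_mul_pow_sub c (Finset.mem_Ico.1 hk).1]
  · rw [hq k (by grind), map_zero, mul_zero]

end Polynomials

section Lines

variable {n : ℕ}

lemma aeval_linePoly {A : Type*} [CommRing A] [Algebra ℝ A] (p : MvPolynomial (Fin n) ℝ)
    (a v : Fin n → ℝ) (z : A) :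
    Polynomial.aeval z (linePoly p a v) =
      aeval (fun i ↦ algebraMap ℝ A (a i) + z * algebraMap ℝ A (v i)) p := by
  rw [linePoly, ← AlgHom.comp_apply]
  congr 1
  ext i
  simp only [AlgHom.comp_apply, aeval_X, map_add, map_mul, Polynomial.aeval_C, Polynomial.aeval_X,
    mul_comm]

lemma eval_linePoly (p : MvPolynomial (Fin n) ℝ) (a v : Fin n → ℝ) (t : ℝ) :
    (linePoly p a v).eval t = eval (a + t • v) p := by
  rw [← Polynomial.coe_aeval_eq_eval, aeval_linePoly, ← aeval_eq_eval]
  rfl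

lemma coeff_linePoly (p : MvPolynomial (Fin n) ℝ) (a v : Fin n → ℝ) (k : ℕ) :
    (linePoly p a v).coeff k = eval v (homogeneousComponent k (translatePoly p a)) := by
  rw [← aeval_eq_eval, ← coeff_aeval_X_smul, aeval_translatePoly, linePoly]
  congr 3
  funext i
  simp only [Pi.smul_apply, smul_eq_mul, Polynomial.X_mul_C, Polynomial.algebraMap_eq]
  ring

lemma linePoly_comp_X_add_C (p : MvPolynomial (Fin n) ℝ) (b v : Fin n → ℝ) (t : ℝ) :
    (linePoly p b v).comp (Polynomial.X + Polynomial.C t) = linePoly p (b + t • v) v := by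
  rw [Polynomial.comp_eq_aeval, aeval_linePoly, linePoly]
  congr 2
  funext i
  simp only [Polynomial.algebraMap_eq, Pi.add_apply, Pi.smul_apply, smul_eq_mul, map_add, map_mul]
  ring

end Lines

section InitialForm

variable {n : ℕ} {p : MvPolynomial (Fin n) ℝ} {a v : Fin n → ℝ}

/-- The initial form of `p` at `a`, i.e. the lowest-degree non-zero homogeneous part of
`p(x + a)`; its zero set is the tangent cone of `p` at `a`. -/
noncomputable def initialForm (p : MvPolynomial (Fin n) ℝ) (a : Fin n → ℝ) :
    MvPolynomial (Fin n) ℝ :=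
  homogeneousComponent (multAt p a) (translatePoly p a)

lemma initialForm_ne_zero (hp : p ≠ 0) (a : Fin n → ℝ) : initialForm p a ≠ 0 :=
  Nat.sInf_mem (exists_homogeneousComponent_ne_zero (translatePoly_ne_zero hp a))

lemma homogeneousComponent_eq_zero_of_lt_multAt {k : ℕ} (hk : k < multAt p a) :
    homogeneousComponent k (translatePoly p a) = 0 :=
  not_not.1 (Nat.notMem_of_lt_sInf hk)

lemma natTrailingDegree_linePoly (hv : eval v (initialForm p a) ≠ 0) :
    (linePoly p a v).natTrailingDegree = multAt p a := by
  have hcoeff : (linePoly p a v).coeff (multAt p a) ≠ 0 := by rwa [coeff_linePoly]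
  refine le_antisymm (Polynomial.natTrailingDegree_le_of_ne_zero hcoeff)
    (Polynomial.le_natTrailingDegree (fun h ↦ hcoeff (by simp [h])) fun k hk ↦ ?_)
  rw [coeff_linePoly, homogeneousComponent_eq_zero_of_lt_multAt hk, map_zero]

end InitialForm

section Garding

variable {n : ℕ} {p : MvPolynomial (Fin n) ℝ} {e g : Fin n → ℝ}

lemma IsRealZero.aeval_ne_zero_of_im_ne_zero (he : IsRealZero p e) (v : Fin n → ℝ) {ζ : ℂ}
    (hζ : ζ.im ≠ 0) : aeval (fun i ↦ (e i : ℂ) + ζ * v i) p ≠ 0 := fun h ↦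
  hζ (he.2 v ζ ((aeval_linePoly p e v ζ).trans h))

lemma eval_ne_zero_of_mem_segment (hg : g ∈ interior (rigidSet p e)) {x : Fin n → ℝ}
    (hx : x ∈ segment ℝ e g) : eval x p ≠ 0 := by
  obtain ⟨τ, ⟨hτ₀, hτ₁⟩, rfl⟩ := (segment_eq_image' ℝ e g).subset hx
  obtain ⟨δ, hδ, hδ₀⟩ : ∃ δ : ℝ, g + δ • (g - e) ∈ rigidSet p e ∧ 0 < δ := by
    have hc : Continuous fun δ : ℝ ↦ g + δ • (g - e) := by fun_prop
    have hnear : ∀ᶠ δ : ℝ in 𝓝 0, g + δ • (g - e) ∈ rigidSet p e :=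
      hc.continuousAt.eventually_mem (by simpa [mem_interior_iff_mem_nhds] using hg)
    exact ((hnear.filter_mono nhdsWithin_le_nhds).and (self_mem_nhdsWithin (s := Set.Ioi 0))).exists
  have hnot_root := hδ (τ / (1 + δ)) (by positivity) ((div_lt_one (by positivity)).2 (by linarith))
  rw [Polynomial.IsRoot, eval_linePoly] at hnot_root
  convert hnot_root using 4
  rw [show g + δ • (g - e) - e = (1 + δ) • (g - e) by module, smul_smul,
    div_mul_cancel₀ _ (by positivity)]

/-- The open disc with centre `-i/2` and radius `1/2`. It is the image of the upper half-plane
under `t ↦ 1 / (t + i)`, which turns the point at infinity into an ordinary boundary point. -/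
def lowerDisc : Set ℂ := {u | Complex.normSq u < -u.im}

lemma isBounded_lowerDisc : Bornology.IsBounded lowerDisc := by
  refine isBounded_iff_forall_norm_le.2 ⟨1, fun u hu ↦ ?_⟩
  have hsq : ‖u‖ ^ 2 < -u.im := (Complex.normSq_eq_norm_sq u).symm.trans_lt hu
  nlinarith [(abs_le.1 (Complex.abs_im_le_norm u)).1, norm_nonneg u]

lemma frontier_lowerDisc_subset : frontier lowerDisc ⊆ {u | Complex.normSq u = -u.im} :=
  frontier_lt_subset_eq Complex.continuous_normSq (by fun_prop)

lemma eventually_mul_mem_lowerDisc {ζ : ℂ} (hζ : ζ.im < 0) :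
    ∀ᶠ q in 𝓝[>] (0 : ℝ) ×ˢ 𝓝 ζ, (q.1 : ℂ) * q.2 ∈ lowerDisc := by
  have hnear : ∀ᶠ q in 𝓝 (0 : ℝ) ×ˢ 𝓝 ζ, q.1 * Complex.normSq q.2 < -q.2.im := by
    rw [← nhds_prod_eq]
    have hl : Continuous fun q : ℝ × ℂ ↦ q.1 * Complex.normSq q.2 := by
      have := Complex.continuous_normSq
      fun_prop
    exact hl.continuousAt.eventually_lt (g := fun q : ℝ × ℂ ↦ -q.2.im) (by fun_prop) (by simpa)
  have hpos : ∀ᶠ q in 𝓝[>] (0 : ℝ) ×ˢ 𝓝 ζ, 0 < q.1 :=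
    tendsto_fst.eventually self_mem_nhdsWithin
  filter_upwards [hnear.filter_mono (prod_mono_left _ nhdsWithin_le_nhds), hpos] with q hq hq₀
  have := mul_lt_mul_of_pos_left hq hq₀
  simp only [lowerDisc, Set.mem_ofPred_eq, map_mul, Complex.normSq_ofReal, Complex.im_ofReal_mul]
  linarith

lemma IsRealZero.aeval_ne_zero_of_normSq_eq (he : IsRealZero p e) (hg : eval g p ≠ 0)
    (v : Fin n → ℝ) {u : ℂ} (hu : Complex.normSq u = -u.im) :
    aeval (fun i ↦ (g i : ℂ) + u * (v i + Complex.I * (e i - g i))) p ≠ 0 := by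
  rcases eq_or_ne u 0 with rfl | hu₀
  · simpa [aeval_ofReal] using hg
  have hnormSq : 0 < Complex.normSq u := Complex.normSq_pos.2 hu₀
  obtain ⟨t, ht⟩ : ∃ t : ℝ, u * (t + Complex.I) = 1 := by
    refine ⟨(u⁻¹).re, ?_⟩
    have him : (u⁻¹).im = 1 := by rw [Complex.inv_im, ← hu, div_self hnormSq.ne']
    have hinv : ((u⁻¹).re : ℂ) + Complex.I = u⁻¹ := Complex.ext (by simp) (by simp [him])
    rw [hinv, mul_inv_cancel₀ hu₀]
  convert he.aeval_ne_zero_of_im_ne_zero (v + t • (g - e)) (ζ := u) (by linarith) using 3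
  funext i
  simp only [Pi.add_apply, Pi.smul_apply, Pi.sub_apply, smul_eq_mul]
  push_cast
  linear_combination ((e i : ℂ) - g i) * ht

lemma IsRealZero.aeval_ne_zero_of_mem_lowerDisc_zero (he : IsRealZero p e)
    (hseg : ∀ x ∈ segment ℝ e g, eval x p ≠ 0) {u : ℂ} (hu : u ∈ lowerDisc) :
    aeval (fun i ↦ (g i : ℂ) + u * (Complex.I * (e i - g i))) p ≠ 0 := by
  have hu : Complex.normSq u < -u.im := hu
  by_cases hre : u.re = 0
  · have hu_eq : u * Complex.I = (-u.im : ℝ) := Complex.ext (by simp) (by simp [hre])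
    have him : -u.im ∈ Set.Icc (0 : ℝ) 1 := by
      rw [Complex.normSq_apply, hre] at hu
      constructor <;> nlinarith
    have hmem : g + (-u.im) • (e - g) ∈ segment ℝ e g :=
      segment_symm ℝ g e ▸ (segment_eq_image' ℝ g e).superset ⟨-u.im, him, rfl⟩
    convert Complex.ofReal_ne_zero.2 (hseg _ hmem) using 1
    rw [← aeval_ofReal]
    congr 2
    funext i
    rw [← mul_assoc, hu_eq]
    simp
  · convert he.aeval_ne_zero_of_im_ne_zero (g - e) (ζ := 1 - u * Complex.I) (by simpa) using 3
    funext i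
    simp only [Pi.sub_apply]
    push_cast
    ring

/- For `u = 1 / (t + i)` the point below is `e + u (t (g - e) + v)`; so for real `t`, that is on
the boundary circle, `p` does not vanish there. Deforming `v` to `0` never lets a root cross the
circle. -/
lemma IsRealZero.aeval_ne_zero_of_mem_lowerDisc (he : IsRealZero p e)
    (hseg : ∀ x ∈ segment ℝ e g, eval x p ≠ 0) (v : Fin n → ℝ) {u : ℂ} (hu : u ∈ lowerDisc) :
    aeval (fun i ↦ (g i : ℂ) + u * (v i + Complex.I * (e i - g i))) p ≠ 0 := by
  let F (s : ℝ) (u : ℂ) : ℂ :=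
    aeval (fun i ↦ (g i : ℂ) + u * ((s • v) i + Complex.I * (e i - g i))) p
  have hF : Continuous F.uncurry := (differentiable_aeval p).continuous.comp (by fun_prop)
  have hd (s : ℝ) : Differentiable ℂ (F s) :=
    Differentiable.comp (g := fun y : Fin n → ℂ ↦ aeval y p) (differentiable_aeval p) (by fun_prop)
  have hfr (s : ℝ) : ∀ w ∈ frontier lowerDisc, F s w ≠ 0 := fun w hw ↦
    he.aeval_ne_zero_of_normSq_eq (hseg g (right_mem_segment ℝ e g)) (s • v)
      (frontier_lowerDisc_subset hw)
  have h₀ : ∀ w ∈ lowerDisc, F 0 w ≠ 0 := fun w hw ↦ by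
    simpa [F] using he.aeval_ne_zero_of_mem_lowerDisc_zero hseg hw
  simpa [F] using forall_mem_ne_zero_of_forall_frontier hF hd isBounded_lowerDisc hfr h₀ 1 u hu

lemma IsRealZero.aeval_ne_zero_of_im_neg (he : IsRealZero p e)
    (hseg : ∀ x ∈ segment ℝ e g, eval x p ≠ 0) (v : Fin n → ℝ) {ζ : ℂ} (hζ : ζ.im < 0) :
    aeval (fun i ↦ (g i : ℂ) + ζ * v i) p ≠ 0 := by
  let F (s : ℝ) (ζ : ℂ) : ℂ :=
    aeval (fun i ↦ (g i : ℂ) + ζ * (v i + s * (Complex.I * (e i - g i)))) p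
  have hF : Continuous F.uncurry := (differentiable_aeval p).continuous.comp (by fun_prop)
  have hd (s : ℝ) : Differentiable ℂ (F s) :=
    Differentiable.comp (g := fun y : Fin n → ℂ ↦ aeval y p) (differentiable_aeval p) (by fun_prop)
  have hne : ∀ᶠ q in 𝓝[>] (0 : ℝ) ×ˢ 𝓝 ζ, F q.1 q.2 ≠ 0 := by
    filter_upwards [eventually_mul_mem_lowerDisc hζ,
      tendsto_fst.eventually (self_mem_nhdsWithin (s := Set.Ioi (0 : ℝ)))] with ⟨s, w⟩ hmem hs
    have hs₀ : (s : ℂ) ≠ 0 := Complex.ofReal_ne_zero.2 (ne_of_gt hs)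
    convert he.aeval_ne_zero_of_mem_lowerDisc hseg (s⁻¹ • v) hmem using 3
    funext i
    simp only [Pi.smul_apply, smul_eq_mul, Complex.ofReal_mul, Complex.ofReal_inv]
    field_simp
  intro hzero
  have hF₀ : F 0 = 0 :=
    eq_zero_of_eventually_ne_zero hF hd nhdsWithin_le_nhds (by simpa [F] using hzero) hne
  refine hseg g (right_mem_segment ℝ e g) ?_
  simpa [F, aeval_ofReal] using congrFun hF₀ 0

theorem IsRealZero.of_forall_mem_segment (he : IsRealZero p e)
    (hseg : ∀ x ∈ segment ℝ e g, eval x p ≠ 0) : IsRealZero p g := by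
  refine ⟨hseg g (right_mem_segment ℝ e g), fun v ζ hroot ↦ ?_⟩
  rw [aeval_linePoly] at hroot
  by_contra him
  rcases lt_or_gt_of_ne him with hneg | hpos
  · exact he.aeval_ne_zero_of_im_neg hseg v hneg hroot
  · refine he.aeval_ne_zero_of_im_neg hseg (-v) (ζ := -ζ) (by simpa) ?_
    simpa using hroot

end Garding

section TangentCone

variable {n : ℕ} {p : MvPolynomial (Fin n) ℝ} {e f : Fin n → ℝ}

/- For real `l`, `a + l y = (a + Im y + l Re y) + (1 - i l) (-Im y)`, and the first summand is close
to `f` when `(l, y)` is close to `(0, i (f - a))`. -/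
lemma IsRealZero.eventually_aeval_add_smul_ne_zero (he : IsRealZero p e)
    (hf : f ∈ interior (rigidSet p e)) (a : Fin n → ℝ) :
    ∀ᶠ q in 𝓝[>] (0 : ℝ) ×ˢ 𝓝 (fun i ↦ Complex.I * (f i - a i)),
      aeval (fun i ↦ (a i : ℂ) + q.1 * q.2 i) p ≠ 0 := by
  let x (q : ℝ × (Fin n → ℂ)) : Fin n → ℝ := fun i ↦ a i + (q.2 i).im + q.1 * (q.2 i).re
  have hx : ContinuousAt x (0, fun i ↦ Complex.I * (f i - a i)) := by fun_prop
  have hx₀ : x (0, fun i ↦ Complex.I * (f i - a i)) = f := by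
    funext i
    simp [x]
  have hmem : ∀ᶠ q in 𝓝 (0 : ℝ) ×ˢ 𝓝 (fun i ↦ Complex.I * (f i - a i)),
      x q ∈ interior (rigidSet p e) := by
    rw [← nhds_prod_eq]
    exact hx.eventually_mem (by rw [hx₀]; exact isOpen_interior.mem_nhds hf)
  filter_upwards [hmem.filter_mono (prod_mono_left _ nhdsWithin_le_nhds),
    tendsto_fst.eventually (self_mem_nhdsWithin (s := Set.Ioi (0 : ℝ)))] with ⟨l, y⟩ hxl hl
  have hrz : IsRealZero p (x (l, y)) :=
    he.of_forall_mem_segment fun _ ↦ eval_ne_zero_of_mem_segment hxl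
  convert hrz.aeval_ne_zero_of_im_ne_zero (fun i ↦ -(y i).im) (ζ := 1 - l * Complex.I)
    (by simpa using (ne_of_gt hl)) using 3
  funext i
  simp only [x]
  push_cast
  linear_combination -(l : ℂ) * Complex.re_add_im (y i)

theorem IsRealZero.eval_sub_initialForm_ne_zero (he : IsRealZero p e)
    (hf : f ∈ interior (rigidSet p e)) (a : Fin n → ℝ) : eval (a - f) (initialForm p a) ≠ 0 := by
  have hp : p ≠ 0 := fun h ↦ he.1 (by simp [h])
  let m := multAt p a
  let F (l : ℝ) (y : Fin n → ℂ) : ℂ := blowup (translatePoly p a) m (l : ℂ) y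
  have hF₀ (y : Fin n → ℂ) : F 0 y = aeval y (initialForm p a) := by
    simp only [F, Complex.ofReal_zero, blowup_zero, initialForm, m]
  have hF : Continuous F.uncurry := (continuous_blowup (𝕜 := ℂ) (translatePoly p a) m).comp
    (by fun_prop : Continuous fun q : ℝ × (Fin n → ℂ) ↦ ((q.1 : ℂ), q.2))
  have hd (l : ℝ) : Differentiable ℂ (F l) := differentiable_blowup _ _ _
  have hne : ∀ᶠ q in 𝓝[>] (0 : ℝ) ×ˢ 𝓝 (fun i ↦ Complex.I * (f i - a i)), F q.1 q.2 ≠ 0 := by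
    filter_upwards [he.eventually_aeval_add_smul_ne_zero hf a] with ⟨l, y⟩ hly hzero
    have hpow := pow_mul_blowup (q := translatePoly p a) (m := m)
      (fun _ ↦ homogeneousComponent_eq_zero_of_lt_multAt) (l : ℂ) y
    rw [aeval_translatePoly] at hpow
    refine hly ?_
    convert hpow.symm.trans (mul_eq_zero_of_right _ hzero) using 3
    funext i
    simp [add_comm]
  intro hzero
  have hc : F 0 (fun i ↦ Complex.I * (f i - a i)) = 0 := by
    have hdir : (fun i ↦ Complex.I * ((f i : ℂ) - a i)) =
        (-Complex.I) • fun i ↦ (((a - f) i : ℝ) : ℂ) := by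
      funext i
      simp only [Pi.sub_apply, Complex.ofReal_sub, Pi.smul_apply, smul_eq_mul, neg_mul]
      ring
    have hform : (initialForm p a).IsHomogeneous m := homogeneousComponent_isHomogeneous _ _
    rw [hF₀, hdir, aeval_smul_of_isHomogeneous hform, aeval_ofReal, hzero,
      Complex.ofReal_zero, mul_zero]
  have hF_zero : F 0 = 0 := eq_zero_of_eventually_ne_zero hF hd nhdsWithin_le_nhds hc hne
  refine initialForm_ne_zero hp a (MvPolynomial.funext fun w ↦ ?_)
  rw [map_zero, ← Complex.ofReal_eq_zero, ← aeval_ofReal, ← hF₀, hF_zero, Pi.zero_apply]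

end TangentCone

/-- For a real-zero polynomial `p` with respect to `e` and any point `a`,
the multiplicity of `p` at `a` equals the order of vanishing at `t = 1` of the univariate
polynomial `t ↦ p(f + t(a − f))`, for every `f` in the interior of `S_e(p)`. -/
theorem multiplicity_eq_order_of_vanishing_at_one
    {n : ℕ} (p : MvPolynomial (Fin n) ℝ) (e : Fin n → ℝ) (hrz : IsRealZero p e)
    (a : Fin n → ℝ) (f : Fin n → ℝ) (hf : f ∈ interior (rigidSet p e)) :
    multAt p a = Polynomial.rootMultiplicity 1 (linePoly p f (a - f)) := by
  rw [Polynomial.rootMultiplicity_eq_natTrailingDegree, linePoly_comp_X_add_C, one_smul,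
    add_sub_cancel, natTrailingDegree_linePoly (hrz.eval_sub_initialForm_ne_zero hf a)]
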